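/- arXiv:2112.02284 — 3 statements merged into one kernel-verified Lean document; each statement's English description precedes it below -/
import Mathlib

section
/- Let λ > 0 and X* ∈ L⁰₊, and define φ(a) = E[e^{−aX*}] for a ∈ [a₀,a₁] and ψ(y) = ∫_{[a₀,a₁]} e^{−ay}/φ(a) m(da) for y ∈ ℝ, so that ψ is continuous and strictly decreasing on ℝ with ψ(y) → ∞ as y → −∞ and ψ(y) → 0 as y → ∞, hence has an inverse ψ⁻¹ : (0,∞) → ℝ. Then the condition [h′(X*) + λρ ≥ 0 a.s. and h′(X*) + λρ = 0 a.s. on {X* > 0}] holds if and only if X* = max(ψ⁻¹(λρ), 0) a.s. -/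
/-!
With `φ(a) = E[e^{-aX}]`, the function `ψ` is the Laplace transform of the measure `φ(a)⁻¹ m(da)`,
that is, `y ↦ mgf(-y)` for that measure. As the moment generating function of a nonzero measure
carried by a compact subset of `(0,∞)`, it is continuous and strictly monotone, tends to `0` at one
end by dominated convergence, and to `∞` at the other by `e^{sa} ≥ 1 + sa`. Since `h′(X) = -ψ(X)`,
the first-order condition says pointwise that `t ≤ X`, with equality where `X > 0`, for
`t = ψ⁻¹(λρ)`; as `X ≥ 0`, this is `X = max(t, 0)`.
-/

open MeasureTheory Filter Set
open scoped ENNReal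

noncomputable section

variable {Ω : Type*} [MeasurableSpace Ω]

/-- Entropic risk measure `h_a(X) = (1/a) log E[e^{-aX}]`. -/
def entropic (P : Measure Ω) (a : ℝ) (X : Ω → ℝ) : ℝ :=
  (1 / a) * Real.log (∫ ω, Real.exp (-a * X ω) ∂P)

/-- Weighted entropic risk measure `h(X) = ∫_{[a₀,a₁]} h_a(X) m(da)`. -/
def werm (P : Measure Ω) (m : Measure ℝ) (a₀ a₁ : ℝ) (X : Ω → ℝ) : ℝ :=
  ∫ a in Set.Icc a₀ a₁, entropic P a X ∂m

/-- Marginal risk density transform `h′(X) = -∫_{[a₀,a₁]} e^{-aX}/E[e^{-aX}] m(da)`. -/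
def hprime (P : Measure Ω) (m : Measure ℝ) (a₀ a₁ : ℝ) (X : Ω → ℝ) (ω : Ω) : ℝ :=
  -∫ a in Set.Icc a₀ a₁, Real.exp (-a * X ω) / (∫ ω', Real.exp (-a * X ω') ∂P) ∂m

/-- Extended-real-valued expectation `E[f] = ∫ f⁺ - ∫ f⁻ ∈ [-∞,∞]`. -/
def eint (P : Measure Ω) (f : Ω → ℝ) : EReal :=
  ((∫⁻ ω, ENNReal.ofReal (f ω) ∂P : ℝ≥0∞) : EReal)
    - ((∫⁻ ω, ENNReal.ofReal (-(f ω)) ∂P : ℝ≥0∞) : EReal)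

/-- `E[ρX] ∈ [0,∞]` for a nonnegative payoff. -/
def budget (P : Measure Ω) (ρ X : Ω → ℝ) : ℝ≥0∞ := ∫⁻ ω, ENNReal.ofReal (ρ ω * X ω) ∂P

/-- `X ∈ L⁰₊`: a nonnegative random variable. -/
def Lpos (P : Measure Ω) (X : Ω → ℝ) : Prop := Measurable X ∧ ∀ᵐ ω ∂P, 0 ≤ X ω

/-- Objective of the Lagrangian risk-minimization problem: `h(X) + λ E[ρX]`. -/
def robj (P : Measure Ω) (m : Measure ℝ) (a₀ a₁ : ℝ) (ρ : Ω → ℝ) (lam : ℝ) (X : Ω → ℝ) : EReal :=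
  ((werm P m a₀ a₁ X : ℝ) : EReal) + (lam : EReal) * ((budget P ρ X : ℝ≥0∞) : EReal)

/-- `ψ_X(y) = ∫_{[a₀,a₁]} e^{-ay} / E[e^{-aX}] m(da)`. -/
def psi (P : Measure Ω) (m : Measure ℝ) (a₀ a₁ : ℝ) (X : Ω → ℝ) (y : ℝ) : ℝ :=
  ∫ a in Set.Icc a₀ a₁, Real.exp (-a * y) / (∫ ω, Real.exp (-a * X ω) ∂P) ∂m

/-- Inverse of `ψ_X` on `(0,∞)` (realized via `sSup`, since `ψ_X` is continuous, strictly
decreasing with limits `∞` at `-∞` and `0` at `∞`). -/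
def psiInv (P : Measure Ω) (m : Measure ℝ) (a₀ a₁ : ℝ) (X : Ω → ℝ) (z : ℝ) : ℝ :=
  sSup {y : ℝ | z ≤ psi P m a₀ a₁ X y}

/-- The transform `𝐓X = max(ψ_X⁻¹(λρ), 0)`. -/
def Ttrans (P : Measure Ω) (m : Measure ℝ) (a₀ a₁ lam : ℝ) (ρ : Ω → ℝ) (X : Ω → ℝ) : Ω → ℝ :=
  fun ω => max (psiInv P m a₀ a₁ X (lam * ρ ω)) 0

/-- `X ∈ 𝒳(x)`: nonnegative and `E[ρX] ≤ x`. -/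
def feasible (P : Measure Ω) (ρ : Ω → ℝ) (x : ℝ) (X : Ω → ℝ) : Prop :=
  Lpos P X ∧ budget P ρ X ≤ ENNReal.ofReal x

/-- `γ₁(x)`: the minimal value of `h` over `𝒳(x)`. -/
def gamma1 (P : Measure Ω) (m : Measure ℝ) (a₀ a₁ : ℝ) (ρ : Ω → ℝ) (x : ℝ) : ℝ :=
  sInf (werm P m a₀ a₁ '' {X | feasible P ρ x X})

/-- Expected utility `E[U(X)] ∈ [-∞,∞]`. -/
def eutil (P : Measure Ω) (U : ℝ → ℝ) (X : Ω → ℝ) : EReal := eint P (fun ω => U (X ω))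

/-- Full Lagrangian objective `E[U(X)] - μ h(X) - λ E[ρX]`. -/
def fullObj (P : Measure Ω) (m : Measure ℝ) (a₀ a₁ : ℝ) (ρ : Ω → ℝ) (U : ℝ → ℝ)
    (μ lam : ℝ) (X : Ω → ℝ) : EReal :=
  eutil P U X - ((μ * werm P m a₀ a₁ X : ℝ) : EReal)
    - (lam : EReal) * ((budget P ρ X : ℝ≥0∞) : EReal)

open ProbabilityTheory

section MomentGeneratingFunction

variable {μ : Measure Ω} {X : Ω → ℝ} {t : ℝ}

lemma Iic_zero_subset_integrableExpSet [IsFiniteMeasure μ] (hXm : AEMeasurable X μ)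
    (hX : 0 ≤ᵐ[μ] X) : Iic 0 ⊆ integrableExpSet X μ := by
  intro t ht
  have h := integrable_exp_mul_of_le (X := -X) (-t) 0 (neg_nonneg.2 ht) hXm.neg
    (hX.mono fun _ ↦ neg_nonpos.2)
  simpa only [Pi.neg_apply, neg_mul_neg] using! h

lemma continuousOn_mgf_Iio_zero [IsFiniteMeasure μ] (hXm : AEMeasurable X μ) (hX : 0 ≤ᵐ[μ] X) :
    ContinuousOn (mgf X μ) (Iio 0) :=
  continuousOn_mgf.mono <| isOpen_Iio.subset_interior_iff.2 <|
    Iio_subset_Iic_self.trans (Iic_zero_subset_integrableExpSet hXm hX)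

lemma mgf_pos_of_nonpos [IsFiniteMeasure μ] [NeZero μ] (hXm : AEMeasurable X μ) (hX : 0 ≤ᵐ[μ] X)
    (ht : t ≤ 0) : 0 < mgf X μ t :=
  mgf_pos' (NeZero.ne μ) (Iic_zero_subset_integrableExpSet hXm hX ht)

lemma integral_pos_of_ae_pos [NeZero μ] {f : Ω → ℝ} (hf : ∀ᵐ ω ∂μ, 0 < f ω)
    (hfi : Integrable f μ) : 0 < ∫ ω, f ω ∂μ := by
  have hf₀ : 0 ≤ᵐ[μ] f := hf.mono fun _ ↦ le_of_lt
  refine (integral_nonneg_of_ae hf₀).lt_of_ne' fun h ↦ ?_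
  obtain ⟨ω, hω, hω'⟩ := (hf.and ((integral_eq_zero_iff_of_nonneg_ae hf₀ hfi).1 h)).exists
  exact hω.ne' hω'

lemma strictMonoOn_mgf [NeZero μ] (hX : ∀ᵐ ω ∂μ, 0 < X ω) :
    StrictMonoOn (mgf X μ) (integrableExpSet X μ) := by
  intro s hs t ht hst
  have hpos : 0 < ∫ ω, Real.exp (t * X ω) - Real.exp (s * X ω) ∂μ := by
    refine integral_pos_of_ae_pos ?_ (ht.sub hs)
    filter_upwards [hX] with ω hω
    exact sub_pos.2 (Real.exp_lt_exp.2 (mul_lt_mul_of_pos_right hst hω))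
  rwa [integral_sub ht hs, sub_pos] at hpos

lemma tendsto_mgf_atBot (hXm : AEMeasurable X μ) (hX : ∀ᵐ ω ∂μ, 0 < X ω)
    (ht : t ∈ integrableExpSet X μ) : Tendsto (mgf X μ) atBot (nhds 0) := by
  rw [← integral_zero Ω ℝ]
  refine tendsto_integral_filter_of_dominated_convergence (fun ω ↦ Real.exp (t * X ω))
    (.of_forall fun s ↦ aemeasurable_exp_mul s hXm) ?_ ht ?_
  · filter_upwards [eventually_le_atBot t] with s hst
    filter_upwards [hX] with ω hω
    rw [Real.norm_of_nonneg (Real.exp_nonneg _)]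
    exact Real.exp_le_exp.2 (mul_le_mul_of_nonneg_right hst hω.le)
  · filter_upwards [hX] with ω hω
    exact Real.tendsto_exp_atBot.comp (tendsto_id.atBot_mul_const hω)

lemma measureReal_univ_add_mul_integral_le_mgf [IsFiniteMeasure μ] (hX : Integrable X μ)
    (ht : t ∈ integrableExpSet X μ) : μ.real univ + t * ∫ ω, X ω ∂μ ≤ mgf X μ t :=
  calc μ.real univ + t * ∫ ω, X ω ∂μ
      = ∫ ω, 1 + t * X ω ∂μ := by
        rw [integral_add (integrable_const 1) (hX.const_mul t), integral_const_mul,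
          integral_const, smul_eq_mul, mul_one]
    _ ≤ mgf X μ t := by
        refine integral_mono ((integrable_const 1).add (hX.const_mul t)) ht fun ω ↦ ?_
        simpa only [add_comm] using Real.add_one_le_exp (t * X ω)

lemma tendsto_mgf_atTop [IsFiniteMeasure μ] (hX : 0 < ∫ ω, X ω ∂μ)
    (hint : ∀ᶠ t in atTop, t ∈ integrableExpSet X μ) : Tendsto (mgf X μ) atTop atTop := by
  have hXi : Integrable X μ := .of_integral_ne_zero hX.ne'
  exact tendsto_atTop_mono' _
    (hint.mono fun t ↦ measureReal_univ_add_mul_integral_le_mgf hXi)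
    (tendsto_atTop_add_const_left _ _ (tendsto_id.atTop_mul_const hX))

end MomentGeneratingFunction

section Order

variable {α β : Type*}

lemma csSup_setOf_le_of_strictAnti [ConditionallyCompleteLinearOrder α] [Preorder β] {f : α → β}
    (hf : StrictAnti f) (x : α) : sSup {y | f x ≤ f y} = x := by
  simp only [hf.le_iff_ge]
  exact csSup_Iic

lemma mem_range_of_tendsto_atBot_atTop [LinearOrder α] [Nonempty α] [TopologicalSpace α]
    [PreconnectedSpace α] [LinearOrder β] [TopologicalSpace β] [OrderClosedTopology β]
    {f : α → β} {b z : β} (hf : Continuous f) (hbot : Tendsto f atBot atTop)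
    (htop : Tendsto f atTop (nhds b)) (hz : b < z) : z ∈ range f :=
  mem_range_of_exists_le_of_exists_ge hf
    ((htop.eventually_lt_const hz).exists.imp fun _ ↦ le_of_lt)
    (hbot.eventually_ge_atTop z).exists

lemma eq_max_iff_le_and_eq_of_lt [LinearOrder α] {c t x : α} (hx : c ≤ x) :
    x = max t c ↔ t ≤ x ∧ (c < x → t = x) := by
  rcases hx.eq_or_lt with rfl | hlt
  · simp only [right_eq_sup, lt_irrefl, IsEmpty.forall_iff, and_true]
  · grind

end Order

/-- The measure `φ(a)⁻¹ m(da)` on `[a₀,a₁]`, with `φ(a) = E[e^{-aX}]` written as `mgf X P (-a)`;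
its Laplace transform is `ψ_X`. -/
def psiMeasure (P : Measure Ω) (m : Measure ℝ) (a₀ a₁ : ℝ) (X : Ω → ℝ) : Measure ℝ :=
  (m.restrict (Icc a₀ a₁)).withDensity fun a ↦ ENNReal.ofReal (mgf X P (-a))⁻¹

section PsiMeasure

variable {P : Measure Ω} {m : Measure ℝ} {a₀ a₁ : ℝ} {X : Ω → ℝ}

lemma ae_mem_Icc_psiMeasure : ∀ᵐ a ∂psiMeasure P m a₀ a₁ X, a ∈ Icc a₀ a₁ :=
  (withDensity_absolutelyContinuous _ _).ae_le (ae_restrict_mem measurableSet_Icc)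

lemma ae_pos_psiMeasure (ha₀ : 0 < a₀) : ∀ᵐ a ∂psiMeasure P m a₀ a₁ X, 0 < id a :=
  ae_mem_Icc_psiMeasure.mono fun _ ha ↦ ha₀.trans_le ha.1

lemma mem_integrableExpSet_psiMeasure [IsFiniteMeasure (psiMeasure P m a₀ a₁ X)] (t : ℝ) :
    t ∈ integrableExpSet id (psiMeasure P m a₀ a₁ X) :=
  integrable_exp_mul_of_mem_Icc aemeasurable_id ae_mem_Icc_psiMeasure

variable [IsFiniteMeasure P] [NeZero P]

lemma continuousOn_inv_mgf_neg (hXm : AEMeasurable X P) (hX : 0 ≤ᵐ[P] X) (ha₀ : 0 < a₀) :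
    ContinuousOn (fun a ↦ (mgf X P (-a))⁻¹) (Icc a₀ a₁) := by
  have hneg : ∀ a ∈ Icc a₀ a₁, -a < 0 := fun a ha ↦ neg_neg_of_pos (ha₀.trans_le ha.1)
  exact ((continuousOn_mgf_Iio_zero hXm hX).comp continuousOn_neg hneg).inv₀
    fun a ha ↦ (mgf_pos_of_nonpos hXm hX (hneg a ha).le).ne'

lemma psi_eq_mgf_comp_neg (hXm : AEMeasurable X P) (hX : 0 ≤ᵐ[P] X) (ha₀ : 0 < a₀) :
    psi P m a₀ a₁ X = mgf id (psiMeasure P m a₀ a₁ X) ∘ Neg.neg := by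
  have hφ : AEMeasurable (fun a ↦ (mgf X P (-a))⁻¹) (m.restrict (Icc a₀ a₁)) :=
    (continuousOn_inv_mgf_neg hXm hX ha₀).aemeasurable measurableSet_Icc
  funext y
  rw [Function.comp_apply, mgf, psiMeasure,
    integral_withDensity_eq_integral_toReal_smul₀ hφ.ennreal_ofReal
      (.of_forall fun _ ↦ ENNReal.ofReal_lt_top)]
  refine integral_congr_ae (.of_forall fun a ↦ ?_)
  simp only [mgf, id, smul_eq_mul, mul_comm (-y), mul_neg, neg_mul]
  rw [ENNReal.toReal_ofReal (inv_nonneg.2 (integral_nonneg fun _ ↦ Real.exp_nonneg _)),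
    inv_mul_eq_div]

lemma isFiniteMeasure_psiMeasure [IsFiniteMeasureOnCompacts m] (hXm : AEMeasurable X P)
    (hX : 0 ≤ᵐ[P] X) (ha₀ : 0 < a₀) : IsFiniteMeasure (psiMeasure P m a₀ a₁ X) :=
  isFiniteMeasure_withDensity_ofReal
    ((continuousOn_inv_mgf_neg hXm hX ha₀).integrableOn_compact isCompact_Icc).hasFiniteIntegral

lemma psiMeasure_ne_zero (hXm : AEMeasurable X P) (hX : 0 ≤ᵐ[P] X) (ha₀ : 0 < a₀)
    (hm : m (Icc a₀ a₁) ≠ 0) : psiMeasure P m a₀ a₁ X ≠ 0 := by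
  have hac : m.restrict (Icc a₀ a₁) ≪ psiMeasure P m a₀ a₁ X := by
    refine withDensity_absolutelyContinuous'
      ((continuousOn_inv_mgf_neg hXm hX ha₀).aemeasurable measurableSet_Icc).ennreal_ofReal ?_
    filter_upwards [ae_restrict_mem measurableSet_Icc] with a ha
    have hφ : 0 < mgf X P (-a) := mgf_pos_of_nonpos hXm hX (neg_nonpos.2 (ha₀.le.trans ha.1))
    exact (ENNReal.ofReal_pos.2 (inv_pos.2 hφ)).ne'
  intro h
  rw [h, Measure.absolutelyContinuous_zero_iff, Measure.restrict_eq_zero] at hac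
  exact hm hac

end PsiMeasure

section Psi

variable {P : Measure Ω} [IsFiniteMeasure P] [NeZero P] {m : Measure ℝ}
  [IsFiniteMeasureOnCompacts m] {a₀ a₁ : ℝ} {X : Ω → ℝ}

lemma continuous_psi (hXm : AEMeasurable X P) (hX : 0 ≤ᵐ[P] X) (ha₀ : 0 < a₀) :
    Continuous (psi P m a₀ a₁ X) := by
  have := isFiniteMeasure_psiMeasure (m := m) (a₁ := a₁) hXm hX ha₀
  rw [psi_eq_mgf_comp_neg hXm hX ha₀]
  exact (continuous_mgf mem_integrableExpSet_psiMeasure).comp continuous_neg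

lemma strictAnti_psi (hXm : AEMeasurable X P) (hX : 0 ≤ᵐ[P] X) (ha₀ : 0 < a₀)
    (hm : m (Icc a₀ a₁) ≠ 0) : StrictAnti (psi P m a₀ a₁ X) := by
  have := isFiniteMeasure_psiMeasure (m := m) (a₁ := a₁) hXm hX ha₀
  have : NeZero (psiMeasure P m a₀ a₁ X) := ⟨psiMeasure_ne_zero hXm hX ha₀ hm⟩
  have hmono : StrictMono (mgf id (psiMeasure P m a₀ a₁ X)) := by
    intro s t hst
    exact strictMonoOn_mgf (ae_pos_psiMeasure ha₀) (mem_integrableExpSet_psiMeasure s)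
      (mem_integrableExpSet_psiMeasure t) hst
  rw [psi_eq_mgf_comp_neg hXm hX ha₀]
  exact hmono.comp_strictAnti fun _ _ ↦ neg_lt_neg

lemma tendsto_psi_atTop (hXm : AEMeasurable X P) (hX : 0 ≤ᵐ[P] X) (ha₀ : 0 < a₀) :
    Tendsto (psi P m a₀ a₁ X) atTop (nhds 0) := by
  have := isFiniteMeasure_psiMeasure (m := m) (a₁ := a₁) hXm hX ha₀
  rw [psi_eq_mgf_comp_neg hXm hX ha₀]
  exact (tendsto_mgf_atBot aemeasurable_id (ae_pos_psiMeasure ha₀)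
    (mem_integrableExpSet_psiMeasure 0)).comp tendsto_neg_atTop_atBot

lemma tendsto_psi_atBot (hXm : AEMeasurable X P) (hX : 0 ≤ᵐ[P] X) (ha₀ : 0 < a₀)
    (hm : m (Icc a₀ a₁) ≠ 0) : Tendsto (psi P m a₀ a₁ X) atBot atTop := by
  have := isFiniteMeasure_psiMeasure (m := m) (a₁ := a₁) hXm hX ha₀
  have : NeZero (psiMeasure P m a₀ a₁ X) := ⟨psiMeasure_ne_zero hXm hX ha₀ hm⟩
  have hint : Integrable id (psiMeasure P m a₀ a₁ X) :=
    .of_mem_Icc a₀ a₁ aemeasurable_id ae_mem_Icc_psiMeasure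
  rw [psi_eq_mgf_comp_neg hXm hX ha₀]
  exact (tendsto_mgf_atTop (integral_pos_of_ae_pos (ae_pos_psiMeasure ha₀) hint)
    (.of_forall mem_integrableExpSet_psiMeasure)).comp tendsto_neg_atBot_atTop

lemma psiInv_psi (hXm : AEMeasurable X P) (hX : 0 ≤ᵐ[P] X) (ha₀ : 0 < a₀)
    (hm : m (Icc a₀ a₁) ≠ 0) (y : ℝ) :
    psiInv P m a₀ a₁ X (psi P m a₀ a₁ X y) = y :=
  csSup_setOf_le_of_strictAnti (strictAnti_psi hXm hX ha₀ hm) y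

lemma psi_psiInv (hXm : AEMeasurable X P) (hX : 0 ≤ᵐ[P] X) (ha₀ : 0 < a₀)
    (hm : m (Icc a₀ a₁) ≠ 0) {z : ℝ} (hz : 0 < z) :
    psi P m a₀ a₁ X (psiInv P m a₀ a₁ X z) = z := by
  obtain ⟨y, rfl⟩ : z ∈ range (psi P m a₀ a₁ X) :=
    mem_range_of_tendsto_atBot_atTop (continuous_psi hXm hX ha₀)
      (tendsto_psi_atBot hXm hX ha₀ hm) (tendsto_psi_atTop hXm hX ha₀) hz
  rw [psiInv_psi hXm hX ha₀ hm]

lemma foc_iff_eq_max_psiInv (hXm : AEMeasurable X P) (hX : 0 ≤ᵐ[P] X) (ha₀ : 0 < a₀)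
    (hm : m (Icc a₀ a₁) ≠ 0) {x z : ℝ} (hx : 0 ≤ x) (hz : 0 < z) :
    (0 ≤ -psi P m a₀ a₁ X x + z ∧ (0 < x → -psi P m a₀ a₁ X x + z = 0)) ↔
      x = max (psiInv P m a₀ a₁ X z) 0 := by
  have hanti := strictAnti_psi hXm hX ha₀ hm
  rw [eq_max_iff_le_and_eq_of_lt hx, ← hanti.le_iff_ge (a := x),
    ← hanti.injective.eq_iff (b := x), psi_psiInv hXm hX ha₀ hm hz, ← sub_eq_neg_add,
    sub_nonneg, sub_eq_zero]

end Psi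

theorem foc_iff_psi_inverse_form_general (P : Measure Ω) [IsFiniteMeasure P] [NeZero P]
    (a₀ a₁ : ℝ) (ha₀ : 0 < a₀) (m : Measure ℝ) [IsFiniteMeasureOnCompacts m]
    (hm : m (Icc a₀ a₁) ≠ 0) (ρ : Ω → ℝ) (hρ : ∀ᵐ ω ∂P, 0 < ρ ω) (lam : ℝ) (hlam : 0 < lam)
    (X : Ω → ℝ) (hXm : AEMeasurable X P) (hX : 0 ≤ᵐ[P] X) :
    Continuous (psi P m a₀ a₁ X) ∧
    StrictAnti (psi P m a₀ a₁ X) ∧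
    Tendsto (psi P m a₀ a₁ X) atBot atTop ∧
    Tendsto (psi P m a₀ a₁ X) atTop (nhds 0) ∧
    (∀ z : ℝ, 0 < z → psi P m a₀ a₁ X (psiInv P m a₀ a₁ X z) = z) ∧
    (∀ y : ℝ, psiInv P m a₀ a₁ X (psi P m a₀ a₁ X y) = y) ∧
    (((∀ᵐ ω ∂P, 0 ≤ hprime P m a₀ a₁ X ω + lam * ρ ω) ∧
        (∀ᵐ ω ∂P, 0 < X ω → hprime P m a₀ a₁ X ω + lam * ρ ω = 0)) ↔
      (∀ᵐ ω ∂P, X ω = max (psiInv P m a₀ a₁ X (lam * ρ ω)) 0)) := by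
  refine ⟨continuous_psi hXm hX ha₀, strictAnti_psi hXm hX ha₀ hm,
    tendsto_psi_atBot hXm hX ha₀ hm, tendsto_psi_atTop hXm hX ha₀,
    fun z ↦ psi_psiInv hXm hX ha₀ hm, psiInv_psi hXm hX ha₀ hm, ?_⟩
  rw [← eventually_and]
  refine eventually_congr ?_
  filter_upwards [hX, hρ] with ω hXω hρω
  have hprime_eq : hprime P m a₀ a₁ X ω = -psi P m a₀ a₁ X (X ω) := rfl
  rw [hprime_eq]
  exact foc_iff_eq_max_psiInv hXm hX ha₀ hm hXω (mul_pos hlam hρω)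

/-- for `X* ∈ L⁰₊`, the function `ψ(y) = ∫ e^{-ay}/E[e^{-aX*}] m(da)` is
continuous and strictly decreasing with limits `∞` at `-∞` and `0` at `∞` (hence has an
inverse on `(0,∞)`, realized by `psiInv`), and the first-order condition
`[h′(X*) + λρ ≥ 0 a.s. and h′(X*) + λρ = 0 a.s. on {X* > 0}]` holds iff
`X* = max(ψ⁻¹(λρ), 0)` a.s. -/
theorem foc_iff_psi_inverse_form (P : Measure Ω) [IsProbabilityMeasure P]
    (a₀ a₁ : ℝ) (ha₀ : 0 < a₀) (ha₀₁ : a₀ < a₁)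
    (m : Measure ℝ) [IsProbabilityMeasure m] (hm : m (Set.Icc a₀ a₁) = 1)
    (ρ : Ω → ℝ) (hmρ : Measurable ρ) (hρ0 : ∀ᵐ ω ∂P, 0 < ρ ω) (hρint : Integrable ρ P)
    (lam : ℝ) (hlam : 0 < lam)
    (X : Ω → ℝ) (hX : Lpos P X) :
    Continuous (psi P m a₀ a₁ X) ∧
    StrictAnti (psi P m a₀ a₁ X) ∧
    Tendsto (psi P m a₀ a₁ X) atBot atTop ∧
    Tendsto (psi P m a₀ a₁ X) atTop (nhds 0) ∧
    (∀ z : ℝ, 0 < z → psi P m a₀ a₁ X (psiInv P m a₀ a₁ X z) = z) ∧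
    (∀ y : ℝ, psiInv P m a₀ a₁ X (psi P m a₀ a₁ X y) = y) ∧
    (((∀ᵐ ω ∂P, 0 ≤ hprime P m a₀ a₁ X ω + lam * ρ ω) ∧
        (∀ᵐ ω ∂P, 0 < X ω → hprime P m a₀ a₁ X ω + lam * ρ ω = 0)) ↔
      (∀ᵐ ω ∂P, X ω = max (psiInv P m a₀ a₁ X (lam * ρ ω)) 0)) :=
  foc_iff_psi_inverse_form_general P a₀ a₁ ha₀ m (hm.trans_ne one_ne_zero) ρ hρ0 lam hlam X
    hX.1.aemeasurable hX.2
end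
end

section
/- Fix x > 0 and μ > 0. Then X* ∈ L⁰₊ solves the problem — maximize E[U(X)] − μ·h(X) over X ∈ L⁰₊ subject to E[ρX] ≤ x — if and only if there exists λ* > 0 such that (i) X* maximizes E[U(X)] − μ·h(X) − λ*·E[ρX] over X ∈ L⁰₊ and (ii) E[ρX*] = x. Moreover, in that case λ* is a supergradient of the value function v_μ at x: v_μ(y) ≤ v_μ(x) + λ*·(y − x) for all y > 0. -/
open MeasureTheory Filter Set
open scoped ENNReal

noncomputable section

variable {Ω : Type*} [MeasurableSpace Ω]

/-!
Scaling a payoff of finite price down to an affordable one and using the concavity of `U` shows that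
`U(Y)` is integrable for every payoff `Y` of finite price, so on these payoffs the objective is
real-valued. There it is concave, because entropic risk is convex, and adding a small amount of cash
strictly improves it, because entropic risk decreases by exactly that amount. Hence an optimal
payoff exhausts the budget. With `G` for the objective and `b` for the price, the two slopes
`(G Z - G X*) / (b Z - x)` for `b Z > x` and `(G X* - G Y) / (x - b Y)` for `b Y < x` are ordered by
concavity, and any number separating them is a multiplier; strict improvability makes it positive.
The converse and the supergradient inequality are rearrangements of the Lagrangian inequality that
remain valid in `EReal`.
-/

/-! ### Lagrange multipliers for one budget constraint -/

section Duality

variable {E : Type*}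

theorem div_sub_le_div_sub_of_forall_le [AddCommMonoid E] [Module ℝ E] {K : Set E} {G b : E → ℝ}
    {x v : ℝ} (hG : ConcaveOn ℝ K G) (hb : ConvexOn ℝ K b) (hv : ∀ Y ∈ K, b Y ≤ x → G Y ≤ v)
    {Y Z : E} (hY : Y ∈ K) (hZ : Z ∈ K) (hYx : b Y < x) (hxZ : x < b Z) :
    (G Z - v) / (b Z - x) ≤ (v - G Y) / (x - b Y) := by
  have hs : 0 < b Z - x := sub_pos.2 hxZ
  have ht : 0 < x - b Y := sub_pos.2 hYx
  have hd : 0 < (b Z - x) + (x - b Y) := add_pos hs ht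
  -- The weights are chosen so that the convex combination of `Y` and `Z` costs at most `x`.
  have hcost := (convexOn_iff_div.1 hb).2 hY hZ hs.le ht.le hd
  have hgain := (concaveOn_iff_div.1 hG).2 hY hZ hs.le ht.le hd
  have hprice : (b Z - x) / ((b Z - x) + (x - b Y)) * b Y
      + (x - b Y) / ((b Z - x) + (x - b Y)) * b Z = x := by
    field_simp
    ring
  have hle := hgain.trans <| hv _ (hG.1 hY hZ (by positivity) (by positivity)
    (by field_simp)) (hcost.trans_eq hprice)
  simp only [smul_eq_mul, div_mul_eq_mul_div, ← add_div] at hle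
  rw [div_le_iff₀ hd] at hle
  rw [div_le_div_iff₀ hs ht]
  linarith

theorem exists_nonneg_multiplier [AddCommMonoid E] [Module ℝ E] {K : Set E} {G b : E → ℝ}
    {x v : ℝ} (hG : ConcaveOn ℝ K G) (hb : ConvexOn ℝ K b) (hslater : ∃ Y ∈ K, b Y < x)
    (hv : ∀ Y ∈ K, b Y ≤ x → G Y ≤ v) :
    ∃ lam : ℝ, 0 ≤ lam ∧ ∀ Y ∈ K, G Y ≤ v + lam * (b Y - x) := by
  let right := insert 0 ((fun Z => (G Z - v) / (b Z - x)) '' {Z | Z ∈ K ∧ x < b Z})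
  let left := (fun Y => (v - G Y) / (x - b Y)) '' {Y | Y ∈ K ∧ b Y < x}
  have hsep : ∀ r ∈ right, ∀ l ∈ left, r ≤ l := by
    rintro _ (rfl | ⟨Z, ⟨hZ, hxZ⟩, rfl⟩) _ ⟨Y, ⟨hY, hYx⟩, rfl⟩
    · exact div_nonneg (sub_nonneg.2 (hv Y hY hYx.le)) (sub_nonneg.2 hYx.le)
    · exact div_sub_le_div_sub_of_forall_le hG hb hv hY hZ hYx hxZ
  obtain ⟨lam, hright, hleft⟩ :=
    exists_between_of_forall_le (insert_nonempty 0 _) (Nonempty.image _ hslater) hsep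
  refine ⟨lam, hright (mem_insert 0 _), fun Y hY => ?_⟩
  rcases lt_trichotomy (b Y) x with hYx | hYx | hxY
  · have h := hleft (mem_image_of_mem _ ⟨hY, hYx⟩)
    rw [le_div_iff₀ (sub_pos.2 hYx)] at h
    linarith
  · simpa [hYx] using hv Y hY hYx.le
  · have h := hright (mem_insert_of_mem 0 (mem_image_of_mem _ ⟨hY, hxY⟩))
    rw [div_le_iff₀ (sub_pos.2 hxY)] at h
    linarith

variable {L : Set E} {F : E → EReal} {B : E → ℝ≥0∞} {lam x y : ℝ} {X Y : E}

theorem le_add_of_lagrangian_le (hlam : 0 ≤ lam) (hx : 0 ≤ x) (hy : 0 ≤ y)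
    (hX : B X = ENNReal.ofReal x) (hY : B Y ≤ ENNReal.ofReal y)
    (hYX : F Y - lam * B Y ≤ F X - lam * B X) :
    F Y ≤ F X + ((lam * (y - x) : ℝ) : EReal) := by
  have hcost : (lam : EReal) * B Y ≤ ((lam * y : ℝ) : EReal) := by
    rw [EReal.coe_mul, ← max_eq_left hy, ← EReal.coe_ennreal_ofReal]
    exact mul_le_mul_of_nonneg_left (EReal.coe_ennreal_le_coe_ennreal_iff.2 hY)
      (EReal.coe_nonneg.2 hlam)
  have h : F Y - ((lam * y : ℝ) : EReal) ≤ F X - ((lam * x : ℝ) : EReal) := by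
    refine (EReal.sub_le_sub le_rfl hcost).trans (hYX.trans_eq ?_)
    rw [hX, EReal.coe_ennreal_ofReal, max_eq_left hx, EReal.coe_mul]
  rw [EReal.sub_le_iff_le_add (.inl (EReal.coe_ne_bot _)) (.inl (EReal.coe_ne_top _))] at h
  refine h.trans_eq ?_
  rw [sub_eq_add_neg, add_assoc, ← EReal.coe_neg, ← EReal.coe_add]
  ring_nf

theorem le_of_maximizes_lagrangian (hlam : 0 ≤ lam) (hx : 0 ≤ x) (hX : B X = ENNReal.ofReal x)
    (hmax : ∀ Y ∈ L, F Y - lam * B Y ≤ F X - lam * B X) :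
    ∀ Y ∈ L, B Y ≤ ENNReal.ofReal x → F Y ≤ F X := fun Y hYL hYx => by
  simpa using le_add_of_lagrangian_le hlam hx hx hX hYx (hmax Y hYL)

theorem sSup_image_le_add_of_maximizes_lagrangian (hXL : X ∈ L) (hlam : 0 ≤ lam) (hx : 0 ≤ x)
    (hy : 0 ≤ y) (hX : B X = ENNReal.ofReal x)
    (hmax : ∀ Y ∈ L, F Y - lam * B Y ≤ F X - lam * B X) :
    sSup (F '' {Y | Y ∈ L ∧ B Y ≤ ENNReal.ofReal y})
      ≤ sSup (F '' {Y | Y ∈ L ∧ B Y ≤ ENNReal.ofReal x}) + ((lam * (y - x) : ℝ) : EReal) := by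
  refine sSup_le ?_
  rintro _ ⟨Y, ⟨hYL, hYy⟩, rfl⟩
  refine (le_add_of_lagrangian_le hlam hx hy hX hYy (hmax Y hYL)).trans ?_
  gcongr
  exact le_sSup (mem_image_of_mem F ⟨hXL, hX.le⟩)

theorem eq_of_maximizes_of_nonsatiated {c : ℝ≥0∞}
    (hnonsat : ∀ ε ≠ 0, ∃ Z ∈ L, B Z ≤ B X + ε ∧ F X < F Z)
    (hXc : B X ≤ c) (hmax : ∀ Y ∈ L, B Y ≤ c → F Y ≤ F X) : B X = c := by
  by_contra hne
  obtain ⟨Z, hZL, hZ, hlt⟩ := hnonsat (c - B X) (tsub_pos_of_lt (hXc.lt_of_ne hne)).ne'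
  exact hlt.not_ge (hmax Z hZL (hZ.trans_eq (add_tsub_cancel_of_le hXc)))

theorem exists_pos_multiplier_of_maximizes [AddCommMonoid E] [Module ℝ E] {G : E → ℝ}
    (hF : ∀ Y ∈ L, B Y ≠ ⊤ → F Y = G Y)
    (hG : ConcaveOn ℝ {Y | Y ∈ L ∧ B Y ≠ ⊤} G)
    (hB : ConvexOn ℝ {Y | Y ∈ L ∧ B Y ≠ ⊤} fun Y => (B Y).toReal)
    (hslater : ∃ Y ∈ L, B Y < ENNReal.ofReal x) (hXL : X ∈ L)
    (hnonsat : ∀ ε ≠ 0, ∃ Z ∈ L, B Z ≤ B X + ε ∧ F X < F Z)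
    (hXx : B X ≤ ENNReal.ofReal x) (hmax : ∀ Y ∈ L, B Y ≤ ENNReal.ofReal x → F Y ≤ F X) :
    ∃ lam : ℝ, 0 < lam ∧ (∀ Y ∈ L, F Y - lam * B Y ≤ F X - lam * B X) ∧
      B X = ENNReal.ofReal x := by
  have hXeq : B X = ENNReal.ofReal x := eq_of_maximizes_of_nonsatiated hnonsat hXx hmax
  obtain ⟨Y₀, hY₀L, hY₀⟩ := hslater
  have hx : 0 < x := ENNReal.ofReal_pos.1 (pos_of_gt hY₀)
  have hXtop : B X ≠ ⊤ := hXeq ▸ ENNReal.ofReal_ne_top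
  obtain ⟨lam, hlam, hsuper⟩ := exists_nonneg_multiplier (x := x) (v := G X) hG hB
    ⟨Y₀, ⟨hY₀L, hY₀.ne_top⟩, (ENNReal.lt_ofReal_iff_toReal_lt hY₀.ne_top).1 hY₀⟩ fun Y hY hYx => by
      have h := hmax Y hY.1 ((ENNReal.le_ofReal_iff_toReal_le hY.2 hx.le).2 hYx)
      rwa [hF Y hY.1 hY.2, hF X hXL hXtop, EReal.coe_le_coe_iff] at h
  have hpos : 0 < lam := by
    obtain ⟨Z, hZL, hZ, hlt⟩ := hnonsat 1 one_ne_zero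
    have hZtop : B Z ≠ ⊤ := ne_top_of_le_ne_top (by finiteness) hZ
    rw [hF X hXL hXtop, hF Z hZL hZtop, EReal.coe_lt_coe_iff] at hlt
    refine hlam.lt_of_ne ?_
    rintro rfl
    exact hlt.not_ge (by simpa using hsuper Z ⟨hZL, hZtop⟩)
  refine ⟨lam, hpos, fun Y hYL => ?_, hXeq⟩
  by_cases hYtop : B Y = ⊤
  -- Holds even if `F Y = ⊤`, since `⊤ - ⊤ = ⊥` in `EReal`.
  · simp [hYtop, EReal.coe_mul_top_of_pos hpos, sub_eq_add_neg]
  · rw [hF Y hYL hYtop, hF X hXL hXtop, hXeq, ← EReal.coe_ennreal_toReal hYtop,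
      EReal.coe_ennreal_ofReal, max_eq_left hx.le]
    norm_cast
    linarith [hsuper Y ⟨hYL, hYtop⟩]

end Duality

/-! ### Concavity on closures and under integrals -/

theorem concaveOn_closure {E : Type*} [AddCommGroup E] [Module ℝ E] [TopologicalSpace E]
    [IsTopologicalAddGroup E] [ContinuousConstSMul ℝ E] {s : Set E} {f : E → ℝ}
    (hf : ConcaveOn ℝ s f) (hc : ContinuousOn f (closure s)) : ConcaveOn ℝ (closure s) f := by
  refine ⟨hf.1.closure, fun y hy z hz a b ha hb hab => ?_⟩
  have hcombo : ContinuousOn (fun p : E × E => f (a • p.1 + b • p.2)) (closure s ×ˢ closure s) :=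
    hc.comp (by fun_prop) fun p hp => hf.1.closure hp.1 hp.2 ha hb hab
  have hsum : ContinuousOn (fun p : E × E => a • f p.1 + b • f p.2) (closure s ×ˢ closure s) :=
    ((hc.comp continuousOn_fst fun p hp => hp.1).const_smul a).add
      ((hc.comp continuousOn_snd fun p hp => hp.2).const_smul b)
  have hyz : (y, z) ∈ closure (s ×ˢ s) := by
    rw [closure_prod_eq]
    exact ⟨hy, hz⟩
  rw [← closure_prod_eq] at hcombo hsum
  exact le_on_closure (fun p hp => hf.2 hp.1 hp.2 ha hb hab) hsum hcombo hyz

theorem concaveOn_Ici_of_Ioi {f : ℝ → ℝ} {a : ℝ} (hf : ConcaveOn ℝ (Ioi a) f)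
    (hc : ContinuousOn f (Ici a)) : ConcaveOn ℝ (Ici a) f := by
  rw [← closure_Ioi] at hc ⊢
  exact concaveOn_closure hf hc

theorem monotoneOn_Ici_of_Ioi {f : ℝ → ℝ} {a : ℝ} (hf : MonotoneOn f (Ioi a))
    (hc : ContinuousOn f (Ici a)) : MonotoneOn f (Ici a) := by
  rw [← Ioi_insert]
  have hcluster : ClusterPt a (principal (Ioi a)) := mem_closure_iff_clusterPt.1 (by simp)
  exact hf.insert_of_continuousWithinAt hcluster
    ((hc a self_mem_Ici).mono Ioi_subset_Ici_self)

theorem convexOn_integral {α E : Type*} [MeasurableSpace α] {ν : Measure α} [AddCommMonoid E]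
    [Module ℝ E] {K : Set E} {f : E → α → ℝ} (hK : Convex ℝ K)
    (hint : ∀ Y ∈ K, Integrable (f Y) ν)
    (hf : ∀ Y ∈ K, ∀ Z ∈ K, ∀ s t : ℝ, 0 ≤ s → 0 ≤ t → s + t = 1 →
      ∀ᵐ i ∂ν, f (s • Y + t • Z) i ≤ s * f Y i + t * f Z i) :
    ConvexOn ℝ K fun Y => ∫ i, f Y i ∂ν := by
  refine ⟨hK, fun Y hY Z hZ s t hs ht hst => ?_⟩
  have hYi := (hint Y hY).const_mul s
  have hZi := (hint Z hZ).const_mul t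
  calc ∫ i, f (s • Y + t • Z) i ∂ν ≤ ∫ i, s * f Y i + t * f Z i ∂ν :=
        integral_mono_ae (hint _ (hK hY hZ hs ht hst)) (hYi.add hZi)
          (hf Y hY Z hZ s t hs ht hst)
    _ = s • ∫ i, f Y i ∂ν + t • ∫ i, f Z i ∂ν := by
        rw [integral_add hYi hZi, integral_const_mul, integral_const_mul, smul_eq_mul, smul_eq_mul]

/-! ### Nonnegative payoffs and their prices -/

theorem convex_Lpos {P : Measure Ω} : Convex ℝ {Y | Lpos P Y} := by
  intro Y hY Z hZ s t hs ht _
  refine ⟨(hY.1.const_smul s).add (hZ.1.const_smul t), ?_⟩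
  filter_upwards [hY.2, hZ.2] with ω hYω hZω
  exact add_nonneg (mul_nonneg hs hYω) (mul_nonneg ht hZω)

theorem Lpos.smul {P : Measure Ω} {Y : Ω → ℝ} (hY : Lpos P Y) {t : ℝ} (ht : 0 ≤ t) :
    Lpos P (t • Y) :=
  ⟨hY.1.const_smul t, hY.2.mono fun _ hω => mul_nonneg ht hω⟩

theorem Lpos.add_const {P : Measure Ω} {Y : Ω → ℝ} (hY : Lpos P Y) {c : ℝ} (hc : 0 ≤ c) :
    Lpos P (fun ω => Y ω + c) :=
  ⟨hY.1.add_const c, hY.2.mono fun _ hω => add_nonneg hω hc⟩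

section Budget

variable {P : Measure Ω} {ρ Y Z : Ω → ℝ}

theorem budget_add (hρm : AEMeasurable ρ P) (hρ : 0 ≤ᵐ[P] ρ) (hY : Lpos P Y) (hZ : Lpos P Z) :
    budget P ρ (Y + Z) = budget P ρ Y + budget P ρ Z := by
  have hmeas : AEMeasurable (fun ω => ENNReal.ofReal (ρ ω * Y ω)) P :=
    (hρm.mul hY.1.aemeasurable).ennreal_ofReal
  unfold budget
  rw [← lintegral_add_left' hmeas]
  refine lintegral_congr_ae ?_
  filter_upwards [hρ, hY.2, hZ.2] with ω hρω hYω hZω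
  rw [Pi.add_apply, mul_add, ENNReal.ofReal_add (mul_nonneg hρω hYω) (mul_nonneg hρω hZω)]

theorem budget_smul {t : ℝ} (ht : 0 ≤ t) :
    budget P ρ (t • Y) = ENNReal.ofReal t * budget P ρ Y := by
  simp only [budget, Pi.smul_apply, smul_eq_mul, mul_left_comm _ t, ENNReal.ofReal_mul ht]
  exact lintegral_const_mul' _ _ ENNReal.ofReal_ne_top

theorem budget_add_const (hρ : Integrable ρ P) (hρ0 : 0 ≤ᵐ[P] ρ) (hY : Lpos P Y) {c : ℝ}
    (hc : 0 ≤ c) :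
    budget P ρ (fun ω => Y ω + c) = budget P ρ Y + ENNReal.ofReal c * budget P ρ 1 := by
  have hone : Lpos P (1 : Ω → ℝ) := ⟨measurable_one, ae_of_all _ fun _ => zero_le_one⟩
  rw [← budget_smul hc, ← budget_add hρ.aemeasurable hρ0 hY (hone.smul hc)]
  simp [budget]

theorem budget_one_ne_top (hρ : Integrable ρ P) : budget P ρ 1 ≠ ⊤ := by
  simpa [budget] using hρ.lintegral_lt_top.ne

theorem budget_zero : budget P ρ 0 = 0 := by simp [budget]

/-- The payoffs in `L⁰₊` of finite price, on which the extended-real problem is a real one. -/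
def pricedPayoffs (P : Measure Ω) (ρ : Ω → ℝ) : Set (Ω → ℝ) :=
  {Y | Lpos P Y ∧ budget P ρ Y ≠ ⊤}

theorem budget_smul_add_smul (hρm : AEMeasurable ρ P) (hρ : 0 ≤ᵐ[P] ρ) (hY : Lpos P Y)
    (hZ : Lpos P Z) {s t : ℝ} (hs : 0 ≤ s) (ht : 0 ≤ t) :
    budget P ρ (s • Y + t • Z)
      = ENNReal.ofReal s * budget P ρ Y + ENNReal.ofReal t * budget P ρ Z := by
  rw [budget_add hρm hρ (hY.smul hs) (hZ.smul ht), budget_smul hs, budget_smul ht]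

theorem convex_pricedPayoffs (hρm : AEMeasurable ρ P) (hρ : 0 ≤ᵐ[P] ρ) :
    Convex ℝ (pricedPayoffs P ρ) := by
  intro Y hY Z hZ s t hs ht hst
  refine ⟨convex_Lpos hY.1 hZ.1 hs ht hst, ?_⟩
  rw [budget_smul_add_smul hρm hρ hY.1 hZ.1 hs ht]
  exact ENNReal.add_ne_top.2 ⟨ENNReal.mul_ne_top ENNReal.ofReal_ne_top hY.2,
    ENNReal.mul_ne_top ENNReal.ofReal_ne_top hZ.2⟩

theorem convexOn_toReal_budget (hρm : AEMeasurable ρ P) (hρ : 0 ≤ᵐ[P] ρ) :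
    ConvexOn ℝ (pricedPayoffs P ρ) fun Y => (budget P ρ Y).toReal := by
  refine ⟨convex_pricedPayoffs hρm hρ, fun Y hY Z hZ s t hs ht _ => le_of_eq ?_⟩
  simp only [budget_smul_add_smul hρm hρ hY.1 hZ.1 hs ht]
  rw [ENNReal.toReal_add (ENNReal.mul_ne_top ENNReal.ofReal_ne_top hY.2)
    (ENNReal.mul_ne_top ENNReal.ofReal_ne_top hZ.2)]
  simp [ENNReal.toReal_ofReal, hs, ht]

end Budget

/-! ### Expected utility -/

theorem eint_eq_integral {P : Measure Ω} {f : Ω → ℝ} (hf : Integrable f P) :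
    eint P f = ((∫ ω, f ω ∂P : ℝ) : EReal) := by
  have hneg : ∫⁻ ω, ENNReal.ofReal (-f ω) ∂P ≠ ⊤ := hf.neg.lintegral_lt_top.ne
  rw [integral_eq_lintegral_pos_part_sub_lintegral_neg_part hf, EReal.coe_sub, eint,
    EReal.coe_ennreal_toReal hf.lintegral_lt_top.ne, EReal.coe_ennreal_toReal hneg]

theorem integrable_of_eint_ne_top {P : Measure Ω} {f g : Ω → ℝ} (hf : AEStronglyMeasurable f P)
    (hg : Integrable g P) (hgf : g ≤ᵐ[P] f) (hfin : eint P f ≠ ⊤) : Integrable f P := by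
  have hneg : ∫⁻ ω, ENNReal.ofReal (-f ω) ∂P ≠ ⊤ :=
    ne_top_of_le_ne_top hg.neg.lintegral_lt_top.ne <| lintegral_mono_ae <|
      hgf.mono fun _ hω => ENNReal.ofReal_le_ofReal (neg_le_neg hω)
  have hpos : ∫⁻ ω, ENNReal.ofReal (f ω) ∂P ≠ ⊤ := fun htop => hfin <| by
    rw [eint, htop, ← EReal.coe_ennreal_toReal hneg, EReal.coe_ennreal_top, EReal.top_sub_coe]
  refine ⟨hf, ?_⟩
  calc ∫⁻ ω, ‖f ω‖ₑ ∂P = ∫⁻ ω, ENNReal.ofReal (f ω) + ENNReal.ofReal (-f ω) ∂P := by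
        refine lintegral_congr fun ω => ?_
        rcases le_total 0 (f ω) with h | h
        · simp [Real.enorm_eq_ofReal_abs, abs_of_nonneg h,
            ENNReal.ofReal_of_nonpos (neg_nonpos.2 h)]
        · simp [Real.enorm_eq_ofReal_abs, abs_of_nonpos h, ENNReal.ofReal_of_nonpos h]
    _ < ⊤ := by
        rw [lintegral_add_left' hf.aemeasurable.ennreal_ofReal]
        exact ENNReal.add_lt_top.2 ⟨hpos.lt_top, hneg.lt_top⟩

section Utility

variable {P : Measure Ω} {U : ℝ → ℝ} {Y : Ω → ℝ}

theorem aestronglyMeasurable_comp_of_monotoneOn (hU : MonotoneOn U (Ici 0)) (hY : Lpos P Y) :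
    AEStronglyMeasurable (fun ω => U (Y ω)) P := by
  have hmono : Monotone fun y => U (max y 0) := fun y z hyz =>
    hU (le_max_right y 0) (le_max_right z 0) (max_le_max_right 0 hyz)
  refine (hmono.measurable.comp hY.1).aestronglyMeasurable.congr ?_
  filter_upwards [hY.2] with ω hω
  simp [hω]

variable [IsFiniteMeasure P]

theorem integrable_comp_of_eutil_ne_top (hU : MonotoneOn U (Ici 0)) (hY : Lpos P Y)
    (hfin : eutil P U Y ≠ ⊤) : Integrable (fun ω => U (Y ω)) P :=
  integrable_of_eint_ne_top (aestronglyMeasurable_comp_of_monotoneOn hU hY)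
    (integrable_const (U 0)) (hY.2.mono fun _ hω => hU self_mem_Ici hω hω) hfin

theorem integrable_comp_of_integrable_comp_smul (hU : MonotoneOn U (Ici 0))
    (hUconc : ConcaveOn ℝ (Ici 0) U) (hY : Lpos P Y) {t : ℝ} (ht : 0 < t) (ht1 : t ≤ 1)
    (hint : Integrable (fun ω => U ((t • Y) ω)) P) : Integrable (fun ω => U (Y ω)) P := by
  refine integrable_of_le_of_le (aestronglyMeasurable_comp_of_monotoneOn hU hY)
    (g₁ := fun _ => U 0) (g₂ := fun ω => (U ((t • Y) ω) - (1 - t) * U 0) / t) ?_ ?_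
    (integrable_const _) ((hint.sub (integrable_const _)).div_const t)
  · exact hY.2.mono fun _ hω => hU self_mem_Ici hω hω
  · filter_upwards [hY.2] with ω hω
    have h := hUconc.2 hω self_mem_Ici ht.le (sub_nonneg.2 ht1) (add_sub_cancel t 1)
    rw [le_div_iff₀ ht]
    simp only [smul_eq_mul, mul_zero, add_zero, Pi.smul_apply] at h ⊢
    linarith

theorem integrable_comp_of_mem_pricedPayoffs {ρ : Ω → ℝ} (hU : MonotoneOn U (Ici 0))
    (hUconc : ConcaveOn ℝ (Ici 0) U) {x : ℝ} (hx : 0 < x)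
    (hfin : sSup (eutil P U '' {X | feasible P ρ x X}) ≠ ⊤) (hY : Y ∈ pricedPayoffs P ρ) :
    Integrable (fun ω => U (Y ω)) P := by
  set p := (budget P ρ Y).toReal
  have hp : 0 ≤ p := ENNReal.toReal_nonneg
  have ht : 0 < x / (x + p) := by positivity
  have hscaled : feasible P ρ x ((x / (x + p)) • Y) := by
    refine ⟨hY.1.smul ht.le, ?_⟩
    rw [budget_smul ht.le, ← ENNReal.ofReal_toReal hY.2, ← ENNReal.ofReal_mul ht.le]
    refine ENNReal.ofReal_le_ofReal ?_
    rw [div_mul_eq_mul_div, div_le_iff₀ (by positivity)]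
    exact mul_le_mul_of_nonneg_left (le_add_of_nonneg_left hx.le) hx.le
  refine integrable_comp_of_integrable_comp_smul hU hUconc hY.1 ht
    ((div_le_one (by positivity)).2 (le_add_of_nonneg_right hp)) ?_
  exact integrable_comp_of_eutil_ne_top hU hscaled.1
    (ne_top_of_le_ne_top hfin (le_sSup (mem_image_of_mem _ hscaled)))

end Utility

theorem concaveOn_integral_comp {P : Measure Ω} {U : ℝ → ℝ} {S : Set ℝ} {K : Set (Ω → ℝ)}
    (hU : ConcaveOn ℝ S U) (hK : Convex ℝ K) (hKS : ∀ Y ∈ K, ∀ᵐ ω ∂P, Y ω ∈ S)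
    (hint : ∀ Y ∈ K, Integrable (fun ω => U (Y ω)) P) :
    ConcaveOn ℝ K fun Y => ∫ ω, U (Y ω) ∂P := by
  rw [← neg_convexOn_iff]
  refine (convexOn_integral hK (f := fun Y ω => -U (Y ω)) (ν := P)
    (fun Y hY => (hint Y hY).neg) ?_).congr fun Y _ => integral_neg _
  intro Y hY Z hZ s t hs ht hst
  filter_upwards [hKS Y hY, hKS Z hZ] with ω hYω hZω
  have h := hU.2 hYω hZω hs ht hst
  simp only [smul_eq_mul, Pi.add_apply, Pi.smul_apply] at h ⊢
  linarith


/-! ### Entropic risk -/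

theorem convex_setOf_integrable_exp {P : Measure Ω} :
    Convex ℝ {f : Ω → ℝ | Integrable (fun ω => Real.exp (f ω)) P} := by
  intro f hf g hg s t hs ht hst
  have hfm : AEMeasurable f P := by simpa only [Real.log_exp] using hf.aemeasurable.log
  have hgm : AEMeasurable g P := by simpa only [Real.log_exp] using hg.aemeasurable.log
  have hmeas := ((hfm.const_smul s).add (hgm.const_smul t)).exp.aestronglyMeasurable
  refine ((hf.const_mul s).add (hg.const_mul t)).mono' hmeas (ae_of_all _ fun ω => ?_)
  rw [Real.norm_of_nonneg (Real.exp_pos _).le]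
  exact convexOn_exp.2 (mem_univ (f ω)) (mem_univ (g ω)) hs ht hst

theorem convexOn_log_integral_exp {P : Measure Ω} [NeZero P] :
    ConvexOn ℝ {f : Ω → ℝ | Integrable (fun ω => Real.exp (f ω)) P}
      fun f => Real.log (∫ ω, Real.exp (f ω) ∂P) := by
  refine ⟨convex_setOf_integrable_exp, fun f hf g hg s t hs ht hst => ?_⟩
  have hfg := convex_setOf_integrable_exp hf hg hs ht hst
  have hA : 0 < ∫ ω, Real.exp (f ω) ∂P := integral_exp_pos hf
  have hB : 0 < ∫ ω, Real.exp (g ω) ∂P := integral_exp_pos hg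
  set A := ∫ ω, Real.exp (f ω) ∂P
  set B := ∫ ω, Real.exp (g ω) ∂P
  -- Subtracting the logarithms normalizes both exponentials to have integral one.
  have hpoint : ∀ ω, Real.exp ((s • f + t • g) ω) ≤
      Real.exp (s * Real.log A + t * Real.log B)
        * (s * (Real.exp (f ω) / A) + t * (Real.exp (g ω) / B)) := fun ω => by
    have h := convexOn_exp.2 (mem_univ (f ω - Real.log A)) (mem_univ (g ω - Real.log B)) hs ht hst
    simp only [smul_eq_mul, Real.exp_sub, Real.exp_log hA, Real.exp_log hB] at h
    refine (mul_le_mul_of_nonneg_left h (Real.exp_pos _).le).trans_eq' ?_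
    rw [← Real.exp_add]
    congr 1
    simp only [Pi.add_apply, Pi.smul_apply, smul_eq_mul]
    ring
  have hsf := (hf.div_const A).const_mul s
  have htg := (hg.div_const B).const_mul t
  refine (Real.log_le_iff_le_exp (integral_exp_pos hfg)).2 ?_
  calc ∫ ω, Real.exp ((s • f + t • g) ω) ∂P
      ≤ ∫ ω, Real.exp (s * Real.log A + t * Real.log B)
          * (s * (Real.exp (f ω) / A) + t * (Real.exp (g ω) / B)) ∂P :=
        integral_mono hfg ((hsf.add htg).const_mul _) hpoint
    _ = Real.exp (s * Real.log A + t * Real.log B) * (s * (A / A) + t * (B / B)) := by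
        rw [integral_const_mul, integral_add hsf htg, integral_const_mul, integral_const_mul,
          integral_div, integral_div]
    _ = Real.exp (s • Real.log A + t • Real.log B) := by
        rw [div_self hA.ne', div_self hB.ne', mul_one, mul_one, hst, mul_one, smul_eq_mul,
          smul_eq_mul]

section Entropic

variable {P : Measure Ω} [IsFiniteMeasure P] {Y : Ω → ℝ}

theorem integrable_exp_neg_mul (hY : Lpos P Y) {a : ℝ} (ha : 0 ≤ a) :
    Integrable (fun ω => Real.exp (-a * Y ω)) P := by
  simpa only [neg_mul, mul_neg] using
    ProbabilityTheory.integrable_exp_mul_of_le (X := fun ω => -Y ω) a 0 ha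
      hY.1.neg.aemeasurable (hY.2.mono fun _ hω => neg_nonpos.2 hω)

theorem convexOn_entropic [NeZero P] {a : ℝ} (ha : 0 < a) :
    ConvexOn ℝ {Y | Lpos P Y} (entropic P a) := by
  have hlog := (convexOn_log_integral_exp (P := P)).comp_linearMap
    (LinearMap.lsmul ℝ (Ω → ℝ) (-a))
  exact (hlog.subset (fun Y hY => integrable_exp_neg_mul hY ha.le) convex_Lpos).smul
    (one_div_pos.2 ha).le

theorem continuousOn_entropic (hY : Lpos P Y) :
    ContinuousOn (fun a => entropic P a Y) (Ioi 0) := by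
  have hIio : Iio 0 ⊆ interior (ProbabilityTheory.integrableExpSet Y P) :=
    isOpen_Iio.subset_interior_iff.2 fun t ht => by
      simpa only [neg_neg] using! integrable_exp_neg_mul hY (neg_nonneg.2 (mem_Iio.1 ht).le)
  have hcgf : ContinuousOn (ProbabilityTheory.cgf Y P) (Iio 0) :=
    (ProbabilityTheory.analyticOnNhd_cgf.continuousOn).mono hIio
  exact (continuousOn_const.div continuousOn_id fun a ha => (mem_Ioi.1 ha).ne').mul
    (hcgf.comp continuousOn_neg fun a ha => neg_lt_zero.2 (mem_Ioi.1 ha))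

theorem entropic_add_const [NeZero P] (hY : Lpos P Y) {a : ℝ} (ha : 0 < a) (c : ℝ) :
    entropic P a (fun ω => Y ω + c) = entropic P a Y - c := by
  have hint : 0 < ∫ ω, Real.exp (-a * Y ω) ∂P :=
    integral_exp_pos (integrable_exp_neg_mul hY ha.le)
  simp only [entropic, mul_add, Real.exp_add, integral_mul_const]
  rw [Real.log_mul hint.ne' (Real.exp_ne_zero _), Real.log_exp]
  field_simp
  ring

variable {m : Measure ℝ} [IsFiniteMeasureOnCompacts m] {a₀ a₁ : ℝ}

theorem integrableOn_entropic (hY : Lpos P Y) (ha₀ : 0 < a₀) :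
    IntegrableOn (fun a => entropic P a Y) (Icc a₀ a₁) m :=
  ((continuousOn_entropic hY).mono fun _ ha => ha₀.trans_le ha.1).integrableOn_compact
    isCompact_Icc

theorem convexOn_werm [NeZero P] (ha₀ : 0 < a₀) :
    ConvexOn ℝ {Y | Lpos P Y} (werm P m a₀ a₁) := by
  refine convexOn_integral convex_Lpos (f := fun Y a => entropic P a Y)
    (fun Y hY => integrableOn_entropic hY ha₀) fun Y hY Z hZ s t hs ht hst => ?_
  filter_upwards [ae_restrict_mem measurableSet_Icc] with a ha
  exact (convexOn_entropic (ha₀.trans_le ha.1)).2 hY hZ hs ht hst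

theorem werm_add_const [NeZero P] (ha₀ : 0 < a₀) (hY : Lpos P Y) (c : ℝ) :
    werm P m a₀ a₁ (fun ω => Y ω + c) = werm P m a₀ a₁ Y - m.real (Icc a₀ a₁) * c := by
  calc werm P m a₀ a₁ (fun ω => Y ω + c)
      = ∫ a in Icc a₀ a₁, entropic P a Y - c ∂m :=
        setIntegral_congr_fun measurableSet_Icc fun a ha =>
          entropic_add_const hY (ha₀.trans_le ha.1) c
    _ = werm P m a₀ a₁ Y - m.real (Icc a₀ a₁) * c := by
        rw [integral_sub (integrableOn_entropic hY ha₀)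
          (integrableOn_const isCompact_Icc.measure_lt_top.ne), setIntegral_const,
          smul_eq_mul, werm]

end Entropic

/-! ### The risk-adjusted objective -/

/-- The objective `E[U(Y)] - μ h(Y)`, with values in `[-∞, ∞]`. -/
def objective (P : Measure Ω) (m : Measure ℝ) (a₀ a₁ : ℝ) (U : ℝ → ℝ) (μ : ℝ)
    (Y : Ω → ℝ) : EReal :=
  eutil P U Y - ((μ * werm P m a₀ a₁ Y : ℝ) : EReal)

/-- The objective `E[U(Y)] - μ h(Y)` as a real number, meaningful where `U(Y)` is integrable: there
convexity arguments can be carried out in `ℝ`. -/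
def realObjective (P : Measure Ω) (m : Measure ℝ) (a₀ a₁ : ℝ) (U : ℝ → ℝ) (μ : ℝ)
    (Y : Ω → ℝ) : ℝ :=
  ∫ ω, U (Y ω) ∂P - μ * werm P m a₀ a₁ Y

section Objective

variable {P : Measure Ω} {m : Measure ℝ} {a₀ a₁ μ : ℝ} {U : ℝ → ℝ} {Y : Ω → ℝ}

theorem objective_eq_realObjective (hint : Integrable (fun ω => U (Y ω)) P) :
    objective P m a₀ a₁ U μ Y = realObjective P m a₀ a₁ U μ Y := by
  rw [objective, eutil, eint_eq_integral hint, ← EReal.coe_sub, realObjective]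

variable [IsFiniteMeasure P] [NeZero P] [IsFiniteMeasureOnCompacts m]

theorem concaveOn_realObjective {K : Set (Ω → ℝ)} (ha₀ : 0 < a₀) (hμ : 0 ≤ μ)
    (hU : ConcaveOn ℝ (Ici 0) U) (hK : Convex ℝ K) (hpos : ∀ Y ∈ K, Lpos P Y)
    (hint : ∀ Y ∈ K, Integrable (fun ω => U (Y ω)) P) :
    ConcaveOn ℝ K (realObjective P m a₀ a₁ U μ) :=
  (concaveOn_integral_comp hU hK (fun Y hY => (hpos Y hY).2) hint).sub
    (((convexOn_werm ha₀).subset hpos hK).smul hμ)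

theorem realObjective_lt_add_const (ha₀ : 0 < a₀) (hm : m (Icc a₀ a₁) ≠ 0) (hμ : 0 < μ)
    (hU : MonotoneOn U (Ici 0)) (hY : Lpos P Y) {c : ℝ} (hc : 0 < c)
    (hint : Integrable (fun ω => U (Y ω)) P) (hintc : Integrable (fun ω => U (Y ω + c)) P) :
    realObjective P m a₀ a₁ U μ Y < realObjective P m a₀ a₁ U μ (fun ω => Y ω + c) := by
  have hmass : 0 < m.real (Icc a₀ a₁) := ENNReal.toReal_pos hm isCompact_Icc.measure_lt_top.ne
  have hutil : ∫ ω, U (Y ω) ∂P ≤ ∫ ω, U (Y ω + c) ∂P :=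
    integral_mono_ae hint hintc <| hY.2.mono fun ω hω =>
      hU hω (add_nonneg hω hc.le) (le_add_of_nonneg_right hc.le)
  rw [realObjective, realObjective, werm_add_const ha₀ hY]
  linarith [mul_pos hμ (mul_pos hmass hc)]

theorem exists_budget_le_add_and_realObjective_lt {ρ : Ω → ℝ} (ha₀ : 0 < a₀)
    (hm : m (Icc a₀ a₁) ≠ 0) (hμ : 0 < μ) (hU : MonotoneOn U (Ici 0))
    (hρ : Integrable ρ P) (hρ0 : 0 ≤ᵐ[P] ρ)
    (hint : ∀ Y ∈ pricedPayoffs P ρ, Integrable (fun ω => U (Y ω)) P)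
    (hY : Y ∈ pricedPayoffs P ρ) {ε : ℝ≥0∞} (hε : ε ≠ 0) :
    ∃ Z ∈ pricedPayoffs P ρ, budget P ρ Z ≤ budget P ρ Y + ε ∧
      realObjective P m a₀ a₁ U μ Y < realObjective P m a₀ a₁ U μ Z := by
  obtain ⟨c, hc, hcε⟩ := ENNReal.exists_nnreal_pos_mul_lt (budget_one_ne_top hρ) hε
  have hprice : budget P ρ (fun ω => Y ω + c) = budget P ρ Y + c * budget P ρ 1 := by
    simpa only [ENNReal.ofReal_coe_nnreal] using budget_add_const hρ hρ0 hY.1 c.coe_nonneg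
  have hpriced : (fun ω => Y ω + c) ∈ pricedPayoffs P ρ :=
    ⟨hY.1.add_const c.2, hprice ▸ ENNReal.add_ne_top.2 ⟨hY.2, hcε.ne_top⟩⟩
  refine ⟨_, hpriced, hprice ▸ add_le_add_right hcε.le _, ?_⟩
  exact realObjective_lt_add_const ha₀ hm hμ hU hY.1 hc (hint _ hY) (hint _ hpriced)

end Objective

theorem eu_budget_lagrangian_general {P : Measure Ω} [IsFiniteMeasure P] [NeZero P]
    {a₀ a₁ : ℝ} (ha₀ : 0 < a₀) {m : Measure ℝ} [IsFiniteMeasureOnCompacts m]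
    (hm : m (Icc a₀ a₁) ≠ 0) {ρ : Ω → ℝ} (hρ0 : 0 ≤ᵐ[P] ρ) (hρ : Integrable ρ P)
    {U : ℝ → ℝ} (hU : MonotoneOn U (Ici 0)) (hUconc : ConcaveOn ℝ (Ici 0) U)
    (hufin : ∃ x' : ℝ, 0 < x' ∧ sSup (eutil P U '' {X | feasible P ρ x' X}) ≠ ⊤)
    {x : ℝ} (hx : 0 < x) {μ : ℝ} (hμ : 0 < μ) {X : Ω → ℝ} (hX : Lpos P X) :
    ((budget P ρ X ≤ ENNReal.ofReal x ∧
        ∀ Y, Lpos P Y → budget P ρ Y ≤ ENNReal.ofReal x →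
          objective P m a₀ a₁ U μ Y ≤ objective P m a₀ a₁ U μ X) ↔
      ∃ lam : ℝ, 0 < lam ∧
        (∀ Y, Lpos P Y →
          fullObj P m a₀ a₁ ρ U μ lam Y ≤ fullObj P m a₀ a₁ ρ U μ lam X) ∧
        budget P ρ X = ENNReal.ofReal x) ∧
    (∀ lam : ℝ, 0 < lam →
      (∀ Y, Lpos P Y →
        fullObj P m a₀ a₁ ρ U μ lam Y ≤ fullObj P m a₀ a₁ ρ U μ lam X) →
      budget P ρ X = ENNReal.ofReal x →
      ∀ y : ℝ, 0 < y →
        sSup (objective P m a₀ a₁ U μ '' {Y | Lpos P Y ∧ budget P ρ Y ≤ ENNReal.ofReal y})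
          ≤ sSup (objective P m a₀ a₁ U μ '' {Y | Lpos P Y ∧ budget P ρ Y ≤ ENNReal.ofReal x})
            + ((lam * (y - x) : ℝ) : EReal)) := by
  obtain ⟨x', hx', hfin⟩ := hufin
  have hint : ∀ Y ∈ pricedPayoffs P ρ, Integrable (fun ω => U (Y ω)) P := fun Y hY =>
    integrable_comp_of_mem_pricedPayoffs hU hUconc hx' hfin hY
  have hconc : ConcaveOn ℝ (pricedPayoffs P ρ) (realObjective P m a₀ a₁ U μ) :=
    concaveOn_realObjective ha₀ hμ.le hUconc (convex_pricedPayoffs hρ.aemeasurable hρ0)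
      (fun _ hY => hY.1) hint
  have hreal : ∀ Y ∈ pricedPayoffs P ρ,
      objective P m a₀ a₁ U μ Y = realObjective P m a₀ a₁ U μ Y := fun Y hY =>
    objective_eq_realObjective (hint Y hY)
  let L := {Y : Ω → ℝ | Lpos P Y}
  refine ⟨⟨fun ⟨hXx, hmax⟩ => ?_, fun ⟨lam, hlam, hmax, hXx⟩ =>
      ⟨hXx.le, le_of_maximizes_lagrangian (L := L) hlam.le hx.le hXx hmax⟩⟩,
    fun lam hlam hmax hXx y hy =>
      sSup_image_le_add_of_maximizes_lagrangian (L := L) hX hlam.le hx.le hy.le hXx hmax⟩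
  have hXpriced : X ∈ pricedPayoffs P ρ := ⟨hX, ne_top_of_le_ne_top ENNReal.ofReal_ne_top hXx⟩
  have hnonsat : ∀ ε ≠ 0, ∃ Z ∈ L, budget P ρ Z ≤ budget P ρ X + ε ∧
      objective P m a₀ a₁ U μ X < objective P m a₀ a₁ U μ Z := fun ε hε => by
    obtain ⟨Z, hZ, hZX, hlt⟩ :=
      exists_budget_le_add_and_realObjective_lt ha₀ hm hμ hU hρ hρ0 hint hXpriced hε
    exact ⟨Z, hZ.1, hZX, by rwa [hreal X hXpriced, hreal Z hZ, EReal.coe_lt_coe_iff]⟩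
  have hslater : ∃ Y ∈ L, budget P ρ Y < ENNReal.ofReal x :=
    ⟨0, ⟨measurable_zero, ae_of_all _ fun _ => le_rfl⟩, by simpa [budget_zero] using hx⟩
  exact exists_pos_multiplier_of_maximizes (fun Y hY hYtop => hreal Y ⟨hY, hYtop⟩) hconc
    (convexOn_toReal_budget hρ.aemeasurable hρ0) hslater hX hnonsat hXx hmax

/-- Lagrangian characterization for the budget constraint: `X* ∈ L⁰₊` solves
`max E[U(X)] - μ h(X)` over `{X ∈ L⁰₊ : E[ρX] ≤ x}` iff there is `λ* > 0` such that `X*`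
maximizes `E[U(X)] - μ h(X) - λ* E[ρX]` over `L⁰₊` and `E[ρX*] = x`; in that case `λ*` is
a supergradient of the value function `v_μ` at `x`. -/
theorem eu_budget_lagrangian (P : Measure Ω) [IsProbabilityMeasure P]
    (a₀ a₁ : ℝ) (ha₀ : 0 < a₀) (ha₀₁ : a₀ < a₁)
    (m : Measure ℝ) [IsProbabilityMeasure m] (hm : m (Set.Icc a₀ a₁) = 1)
    (ρ : Ω → ℝ) (hmρ : Measurable ρ) (hρ0 : ∀ᵐ ω ∂P, 0 < ρ ω) (hρint : Integrable ρ P)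
    (U U' : ℝ → ℝ)
    (hUc : ContinuousOn U (Set.Ici 0))
    (hUd : ∀ y : ℝ, 0 < y → HasDerivAt U (U' y) y)
    (hU'c : ContinuousOn U' (Set.Ioi 0))
    (hUmono : StrictMonoOn U (Set.Ioi 0))
    (hUconc : StrictConcaveOn ℝ (Set.Ioi 0) U)
    (hInada0 : Tendsto U' (nhdsWithin 0 (Set.Ioi 0)) atTop)
    (hInadaInf : Tendsto U' atTop (nhds 0))
    (hAE : Filter.limsup (fun y => y * U' y / U y) Filter.atTop < 1)
    (hufin : ∃ x' : ℝ, 0 < x' ∧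
      ∃ r : ℝ, sSup (eutil P U '' {X | feasible P ρ x' X}) = (r : EReal))
    (x : ℝ) (hx : 0 < x) (μ : ℝ) (hμ : 0 < μ)
    (X : Ω → ℝ) (hX : Lpos P X) :
    ((budget P ρ X ≤ ENNReal.ofReal x ∧
        ∀ Y, Lpos P Y → budget P ρ Y ≤ ENNReal.ofReal x →
          eutil P U Y - ((μ * werm P m a₀ a₁ Y : ℝ) : EReal)
            ≤ eutil P U X - ((μ * werm P m a₀ a₁ X : ℝ) : EReal)) ↔
      ∃ lam : ℝ, 0 < lam ∧
        (∀ Y, Lpos P Y →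
          fullObj P m a₀ a₁ ρ U μ lam Y ≤ fullObj P m a₀ a₁ ρ U μ lam X) ∧
        budget P ρ X = ENNReal.ofReal x) ∧
    (∀ lam : ℝ, 0 < lam →
      (∀ Y, Lpos P Y →
        fullObj P m a₀ a₁ ρ U μ lam Y ≤ fullObj P m a₀ a₁ ρ U μ lam X) →
      budget P ρ X = ENNReal.ofReal x →
      ∀ y : ℝ, 0 < y →
        sSup ((fun Y => eutil P U Y - ((μ * werm P m a₀ a₁ Y : ℝ) : EReal)) ''
            {Y | Lpos P Y ∧ budget P ρ Y ≤ ENNReal.ofReal y})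
          ≤ sSup ((fun Y => eutil P U Y - ((μ * werm P m a₀ a₁ Y : ℝ) : EReal)) ''
              {Y | Lpos P Y ∧ budget P ρ Y ≤ ENNReal.ofReal x})
            + ((lam * (y - x) : ℝ) : EReal)) := by
  obtain ⟨x', hx', r, hr⟩ := hufin
  exact eu_budget_lagrangian_general ha₀ (by simp [hm]) (hρ0.mono fun _ h => h.le) hρint
    (monotoneOn_Ici_of_Ioi hUmono.monotoneOn hUc) (concaveOn_Ici_of_Ioi hUconc.concaveOn hUc)
    ⟨x', hx', hr ▸ EReal.coe_ne_top r⟩ hx hμ hX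
end
end

section
/- Let μ > 0 and λ > 0 be such that the supremum of E[U(X)] − μ·h(X) − λ·E[ρX] over X ∈ L⁰₊ is finite. If X* ∈ L⁰₊ maximizes E[U(X)] − μ·h(X) − λ·E[ρX] over X ∈ L⁰₊, then X* > 0 a.s. -/
open MeasureTheory Filter Set
open scoped ENNReal

noncomputable section

variable {Ω : Type*} [MeasurableSpace Ω]

/-!
If a maximizer `X` vanished on a non-null set `A`, raise it to a small `ε > 0` on `A`. The risk `h`
does not increase, the cost `λ E[ρX]` grows by `λ ε E[ρ 1_A]`, and expected utility grows by
`P(A) (U ε - U 0)`. Since `U'(0+) = ∞`, the mean value theorem makes the last increment exceed any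
given multiple of `ε` for a suitable `ε`, contradicting optimality. Comparing the real increments is
legitimate because a finite objective value forces `U(X)` and `ρX` to be integrable.
-/

open ProbabilityTheory

lemma exists_mul_lt_sub_of_tendsto_deriv_atTop {f f' : ℝ → ℝ} {x : ℝ}
    (hfc : ContinuousOn f (Ici x)) (hfd : ∀ y, x < y → HasDerivAt f (f' y) y)
    (hf' : Tendsto f' (nhdsWithin x (Ioi x)) atTop) (K : ℝ) :
    ∃ y, x < y ∧ K * (y - x) < f y - f x := by
  obtain ⟨y, hxy, hK⟩ := mem_nhdsGT_iff_exists_Ioo_subset.1 (hf'.eventually_gt_atTop K)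
  obtain ⟨c, hc, hslope⟩ := exists_hasDerivAt_eq_slope f f' hxy
    (hfc.mono fun z hz => hz.1) fun z hz => hfd z hz.1
  have hKc : K < f' c := hK hc
  exact ⟨y, hxy, (lt_div_iff₀ (sub_pos.2 hxy)).1 (hslope ▸ hKc)⟩

lemma ereal_sub_ne_bot_iff {x y : EReal} : x - y ≠ ⊥ ↔ x ≠ ⊥ ∧ y ≠ ⊤ := by
  rw [sub_eq_add_neg, EReal.add_ne_bot_iff, Ne, Ne, EReal.neg_eq_bot_iff]

lemma ereal_ne_top_of_sub_ne_top {x y : EReal} (hxy : x - y ≠ ⊤) (hy : y ≠ ⊤) : x ≠ ⊤ :=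
  fun hx => hxy (hx ▸ EReal.top_sub hy)

section Expectation

variable {P : Measure Ω} {f : Ω → ℝ}

lemma integrable_of_lintegral_ofReal_ne_top (hf : AEStronglyMeasurable f P)
    (hpos : ∫⁻ ω, ENNReal.ofReal (f ω) ∂P ≠ ⊤) (hneg : ∫⁻ ω, ENNReal.ofReal (-f ω) ∂P ≠ ⊤) :
    Integrable f P := by
  refine ⟨hf, hasFiniteIntegral_iff_norm f |>.2 ?_⟩
  calc ∫⁻ ω, ENNReal.ofReal ‖f ω‖ ∂P
      ≤ ∫⁻ ω, ENNReal.ofReal (f ω) + ENNReal.ofReal (-f ω) ∂P := by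
        refine lintegral_mono fun ω => ?_
        rcases abs_choice (f ω) with h | h
        · exact (congrArg ENNReal.ofReal h).trans_le le_self_add
        · exact (congrArg ENNReal.ofReal h).trans_le le_add_self
    _ = ∫⁻ ω, ENNReal.ofReal (f ω) ∂P + ∫⁻ ω, ENNReal.ofReal (-f ω) ∂P :=
        lintegral_add_left' hf.aemeasurable.ennreal_ofReal _
    _ < ⊤ := ENNReal.add_lt_top.2 ⟨hpos.lt_top, hneg.lt_top⟩

lemma eint_eq_coe_integral (hf : Integrable f P) : eint P f = ((∫ ω, f ω ∂P : ℝ) : EReal) := by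
  have hneg : ∫⁻ ω, ENNReal.ofReal (-f ω) ∂P ≠ ⊤ := hf.neg.lintegral_lt_top.ne
  rw [integral_eq_lintegral_pos_part_sub_lintegral_neg_part hf, eint, EReal.coe_sub,
    EReal.coe_ennreal_toReal hf.lintegral_lt_top.ne, EReal.coe_ennreal_toReal hneg]

lemma integrable_of_eint_ne (hf : AEStronglyMeasurable f P) (hbot : eint P f ≠ ⊥)
    (htop : eint P f ≠ ⊤) : Integrable f P := by
  have hneg := (ereal_sub_ne_bot_iff.1 hbot).2
  have hpos := ereal_ne_top_of_sub_ne_top htop hneg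
  exact integrable_of_lintegral_ofReal_ne_top hf (mt EReal.coe_ennreal_eq_top_iff.2 hpos)
    (mt EReal.coe_ennreal_eq_top_iff.2 hneg)

lemma budget_eq_ofReal_integral {ρ X : Ω → ℝ} (hρX : Integrable (fun ω => ρ ω * X ω) P)
    (hρX0 : ∀ᵐ ω ∂P, 0 ≤ ρ ω * X ω) :
    budget P ρ X = ENNReal.ofReal (∫ ω, ρ ω * X ω ∂P) :=
  (ofReal_integral_eq_lintegral_ofReal hρX hρX0).symm

end Expectation

section RaiseZeros

variable {α : Type*}

/-- The payoff `X` raised by `ε` where it is nonpositive; for `X ∈ L⁰₊` this is a.s. its zero set.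
It is the competitor that beats a payoff vanishing on a non-null set. -/
def raiseZeros (X : α → ℝ) (ε : ℝ) (ω : α) : ℝ :=
  X ω + {ω | X ω ≤ 0}.indicator (fun _ => ε) ω

lemma le_raiseZeros (X : α → ℝ) {ε : ℝ} (hε : 0 ≤ ε) (ω : α) : X ω ≤ raiseZeros X ε ω :=
  le_add_of_nonneg_right (indicator_nonneg (fun _ _ => hε) ω)

lemma mul_raiseZeros (ρ X : α → ℝ) (ε : ℝ) (ω : α) :
    ρ ω * raiseZeros X ε ω = ρ ω * X ω + {ω | X ω ≤ 0}.indicator (fun ω => ρ ω * ε) ω := by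
  rw [raiseZeros, mul_add, ← indicator_mul_right]

end RaiseZeros

lemma entropic_eq_cgf (P : Measure Ω) (a : ℝ) (X : Ω → ℝ) :
    entropic P a X = 1 / a * cgf X P (-a) :=
  rfl

namespace Lpos

variable {P : Measure Ω} {X Y ρ : Ω → ℝ} {U : ℝ → ℝ} {a₀ ε : ℝ}

lemma aestronglyMeasurable_comp (hX : Lpos P X) (hU : ContinuousOn U (Ici 0)) :
    AEStronglyMeasurable (fun ω => U (X ω)) P := by
  have hsupp : (P.map X).restrict (Ici 0) = P.map X :=
    Measure.restrict_eq_self_of_ae_mem ((ae_map_iff hX.1.aemeasurable measurableSet_Ici).2 hX.2)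
  have hUmap : AEStronglyMeasurable U (P.map X) :=
    hsupp ▸ hU.aestronglyMeasurable measurableSet_Ici
  exact hUmap.comp_measurable hX.1

lemma ae_nonneg_mul (hX : Lpos P X) (hρ : ∀ᵐ ω ∂P, 0 ≤ ρ ω) : ∀ᵐ ω ∂P, 0 ≤ ρ ω * X ω := by
  filter_upwards [hρ, hX.2] with ω hρω hXω using mul_nonneg hρω hXω

section Risk

variable [IsFiniteMeasure P]

lemma integrable_exp_mul (hX : Lpos P X) {t : ℝ} (ht : t ≤ 0) :
    Integrable (fun ω => Real.exp (t * X ω)) P := by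
  have hXm := hX.1
  refine Integrable.of_bound (C := 1) (by fun_prop) ?_
  filter_upwards [hX.2] with ω hXω
  rw [Real.norm_eq_abs, Real.abs_exp, Real.exp_le_one_iff]
  exact mul_nonpos_of_nonpos_of_nonneg ht hXω

lemma continuousOn_cgf (hX : Lpos P X) : ContinuousOn (cgf X P) (Iio 0) :=
  analyticOn_cgf.continuousOn.mono <|
    isOpen_Iio.subset_interior_iff.2 fun _ ht => hX.integrable_exp_mul (le_of_lt ht)

lemma integrableOn_entropic (hX : Lpos P X) (ha₀ : 0 < a₀) (m : Measure ℝ)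
    [IsFiniteMeasureOnCompacts m] (a₁ : ℝ) :
    IntegrableOn (fun a => entropic P a X) (Icc a₀ a₁) m := by
  simp only [entropic_eq_cgf]
  have hpos : ∀ a ∈ Icc a₀ a₁, 0 < a := fun a ha => ha₀.trans_le ha.1
  exact ((continuousOn_const.div continuousOn_id fun a ha => (hpos a ha).ne').mul
    (hX.continuousOn_cgf.comp continuousOn_neg fun a ha => neg_neg_of_pos (hpos a ha)))
      |>.integrableOn_compact isCompact_Icc

lemma entropic_anti (hX : Lpos P X) (hY : Lpos P Y) (hXY : X ≤ᵐ[P] Y) {a : ℝ} (ha : 0 ≤ a) :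
    entropic P a Y ≤ entropic P a X := by
  rcases eq_zero_or_neZero P with rfl | hP
  · simp [entropic]
  have ha' : -a ≤ 0 := neg_nonpos.2 ha
  rw [entropic_eq_cgf, entropic_eq_cgf]
  exact mul_le_mul_of_nonneg_left (Real.log_le_log
    (mgf_pos' hP.out (hY.integrable_exp_mul ha'))
    (mgf_anti_of_nonpos hXY ha' (hX.integrable_exp_mul ha'))) (one_div_nonneg.2 ha)

lemma werm_anti (hX : Lpos P X) (hY : Lpos P Y) (hXY : X ≤ᵐ[P] Y) (ha₀ : 0 < a₀) (m : Measure ℝ)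
    [IsFiniteMeasureOnCompacts m] (a₁ : ℝ) : werm P m a₀ a₁ Y ≤ werm P m a₀ a₁ X :=
  setIntegral_mono_on (hY.integrableOn_entropic ha₀ m a₁) (hX.integrableOn_entropic ha₀ m a₁)
    measurableSet_Icc fun _ ha => hX.entropic_anti hY hXY (ha₀.le.trans ha.1)

end Risk

lemma measurableSet_nonpos (hX : Lpos P X) : MeasurableSet {ω | X ω ≤ 0} :=
  measurableSet_le hX.1 measurable_const

protected lemma raiseZeros (hX : Lpos P X) (hε : 0 ≤ ε) : Lpos P (raiseZeros X ε) :=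
  ⟨hX.1.add (measurable_const.indicator hX.measurableSet_nonpos),
    hX.2.mono fun ω hXω => hXω.trans (le_raiseZeros X hε ω)⟩

lemma comp_raiseZeros_ae_eq (hX : Lpos P X) (U : ℝ → ℝ) (ε : ℝ) :
    (fun ω => U (raiseZeros X ε ω)) =ᵐ[P]
      fun ω => U (X ω) + {ω | X ω ≤ 0}.indicator (fun _ => U ε - U 0) ω := by
  filter_upwards [hX.2] with ω hXω
  by_cases hω : X ω ≤ 0
  · simp [raiseZeros, le_antisymm hω hXω]
  · simp [raiseZeros, hω]

lemma integrable_comp_raiseZeros [IsFiniteMeasure P] (hX : Lpos P X)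
    (hUX : Integrable (fun ω => U (X ω)) P) (ε : ℝ) :
    Integrable (fun ω => U (raiseZeros X ε ω)) P :=
  (hUX.add ((integrable_const _).indicator hX.measurableSet_nonpos)).congr
    (hX.comp_raiseZeros_ae_eq U ε).symm

lemma integral_comp_raiseZeros [IsFiniteMeasure P] (hX : Lpos P X)
    (hUX : Integrable (fun ω => U (X ω)) P) (ε : ℝ) :
    ∫ ω, U (raiseZeros X ε ω) ∂P =
      ∫ ω, U (X ω) ∂P + P.real {ω | X ω ≤ 0} * (U ε - U 0) := by
  rw [integral_congr_ae (hX.comp_raiseZeros_ae_eq U ε),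
    integral_add hUX ((integrable_const _).indicator hX.measurableSet_nonpos),
    integral_indicator_const _ hX.measurableSet_nonpos, smul_eq_mul]

lemma integrable_mul_raiseZeros (hX : Lpos P X) (hρX : Integrable (fun ω => ρ ω * X ω) P)
    (hρ : IntegrableOn ρ {ω | X ω ≤ 0} P) (ε : ℝ) :
    Integrable (fun ω => ρ ω * raiseZeros X ε ω) P := by
  simp only [mul_raiseZeros]
  exact hρX.add ((integrable_indicator_iff hX.measurableSet_nonpos).2 (hρ.mul_const ε))

lemma integral_mul_raiseZeros (hX : Lpos P X) (hρX : Integrable (fun ω => ρ ω * X ω) P)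
    (hρ : IntegrableOn ρ {ω | X ω ≤ 0} P) (ε : ℝ) :
    ∫ ω, ρ ω * raiseZeros X ε ω ∂P =
      ∫ ω, ρ ω * X ω ∂P + (∫ ω in {ω | X ω ≤ 0}, ρ ω ∂P) * ε := by
  simp only [mul_raiseZeros]
  rw [integral_add hρX
      ((integrable_indicator_iff hX.measurableSet_nonpos).2 (hρ.mul_const ε)),
    integral_indicator hX.measurableSet_nonpos, integral_mul_const]

end Lpos

section Objective

variable {P : Measure Ω} {m : Measure ℝ} {a₀ a₁ : ℝ} {ρ X : Ω → ℝ} {U : ℝ → ℝ} {μ lam : ℝ}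

lemma fullObj_eq_coe (hUX : Integrable (fun ω => U (X ω)) P)
    (hρX : Integrable (fun ω => ρ ω * X ω) P) (hρX0 : ∀ᵐ ω ∂P, 0 ≤ ρ ω * X ω) :
    fullObj P m a₀ a₁ ρ U μ lam X =
      ((∫ ω, U (X ω) ∂P - μ * werm P m a₀ a₁ X - lam * ∫ ω, ρ ω * X ω ∂P : ℝ) : EReal) := by
  rw [fullObj, eutil, eint_eq_coe_integral hUX, budget_eq_ofReal_integral hρX hρX0,
    EReal.coe_ennreal_ofReal, max_eq_left (integral_nonneg_of_ae hρX0), ← EReal.coe_mul,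
    ← EReal.coe_sub, ← EReal.coe_sub]

lemma integrable_of_fullObj_ne (hlam : 0 < lam) (hUX : AEStronglyMeasurable (fun ω => U (X ω)) P)
    (hρX : AEStronglyMeasurable (fun ω => ρ ω * X ω) P) (hρX0 : ∀ᵐ ω ∂P, 0 ≤ ρ ω * X ω)
    (hbot : fullObj P m a₀ a₁ ρ U μ lam X ≠ ⊥) (htop : fullObj P m a₀ a₁ ρ U μ lam X ≠ ⊤) :
    Integrable (fun ω => U (X ω)) P ∧ Integrable (fun ω => ρ ω * X ω) P := by
  obtain ⟨hgross_bot, hcost⟩ := ereal_sub_ne_bot_iff.1 hbot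
  have hgross_top := ereal_ne_top_of_sub_ne_top htop hcost
  have hutil_bot := (ereal_sub_ne_bot_iff.1 hgross_bot).1
  have hutil_top := ereal_ne_top_of_sub_ne_top hgross_top (EReal.coe_ne_top _)
  have hbudget : budget P ρ X ≠ ⊤ := fun h =>
    hcost (by rw [h, EReal.coe_ennreal_top, EReal.coe_mul_top_of_pos hlam])
  exact ⟨integrable_of_eint_ne hUX hutil_bot hutil_top,
    hρX, (hasFiniteIntegral_iff_ofReal hρX0).2 hbudget.lt_top⟩

variable [IsFiniteMeasure P]

lemma fullObj_zero_ne_bot : fullObj P m a₀ a₁ ρ U μ lam (fun _ => 0) ≠ ⊥ := by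
  rw [fullObj_eq_coe (integrable_const _) (by simp) (by simp)]
  exact EReal.coe_ne_bot _

lemma fullObj_lt_fullObj_raiseZeros [IsFiniteMeasureOnCompacts m] (ha₀ : 0 < a₀) (hμ : 0 ≤ μ)
    (hX : Lpos P X) (hρ0 : ∀ᵐ ω ∂P, 0 ≤ ρ ω) (hρ : IntegrableOn ρ {ω | X ω ≤ 0} P)
    (hUX : Integrable (fun ω => U (X ω)) P) (hρX : Integrable (fun ω => ρ ω * X ω) P)
    {ε : ℝ} (hε : 0 ≤ ε)
    (hgain : lam * ((∫ ω in {ω | X ω ≤ 0}, ρ ω ∂P) * ε) < P.real {ω | X ω ≤ 0} * (U ε - U 0)) :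
    fullObj P m a₀ a₁ ρ U μ lam X < fullObj P m a₀ a₁ ρ U μ lam (raiseZeros X ε) := by
  have hY := hX.raiseZeros hε
  have hrisk : μ * werm P m a₀ a₁ (raiseZeros X ε) ≤ μ * werm P m a₀ a₁ X :=
    mul_le_mul_of_nonneg_left (hX.werm_anti hY (.of_forall (le_raiseZeros X hε)) ha₀ m a₁) hμ
  rw [fullObj_eq_coe hUX hρX (hX.ae_nonneg_mul hρ0),
    fullObj_eq_coe (hX.integrable_comp_raiseZeros hUX ε) (hX.integrable_mul_raiseZeros hρX hρ ε)
      (hY.ae_nonneg_mul hρ0),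
    hX.integral_comp_raiseZeros hUX, hX.integral_mul_raiseZeros hρX hρ, EReal.coe_lt_coe_iff]
  linarith

end Objective

theorem eu_lagrangian_maximizer_pos_general {P : Measure Ω} [IsFiniteMeasure P]
    {a₀ a₁ : ℝ} (ha₀ : 0 < a₀) {m : Measure ℝ} [IsFiniteMeasureOnCompacts m]
    {ρ : Ω → ℝ} (hρ0 : ∀ᵐ ω ∂P, 0 ≤ ρ ω) (hρint : Integrable ρ P)
    {U U' : ℝ → ℝ} (hUc : ContinuousOn U (Ici 0))
    (hUd : ∀ y : ℝ, 0 < y → HasDerivAt U (U' y) y)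
    (hInada0 : Tendsto U' (nhdsWithin 0 (Ioi 0)) atTop)
    {μ lam : ℝ} (hμ : 0 ≤ μ) (hlam : 0 < lam)
    {X : Ω → ℝ} (hX : Lpos P X) (hfin : fullObj P m a₀ a₁ ρ U μ lam X ≠ ⊤)
    (hXmax : ∀ Y, Lpos P Y →
      fullObj P m a₀ a₁ ρ U μ lam Y ≤ fullObj P m a₀ a₁ ρ U μ lam X) :
    ∀ᵐ ω ∂P, 0 < X ω := by
  have hzero : Lpos P fun _ => 0 := ⟨measurable_const, .of_forall fun _ => le_rfl⟩
  have hbot : fullObj P m a₀ a₁ ρ U μ lam X ≠ ⊥ :=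
    ne_bot_of_le_ne_bot fullObj_zero_ne_bot (hXmax _ hzero)
  obtain ⟨hUX, hρX⟩ := integrable_of_fullObj_ne hlam (hX.aestronglyMeasurable_comp hUc)
    (hρint.1.mul hX.1.aestronglyMeasurable) (hX.ae_nonneg_mul hρ0) hbot hfin
  simp only [ae_iff, not_lt]
  by_contra hA
  have hA_pos : 0 < P.real {ω | X ω ≤ 0} := ENNReal.toReal_pos hA (measure_ne_top P _)
  obtain ⟨ε, hε, hslope⟩ := exists_mul_lt_sub_of_tendsto_deriv_atTop hUc hUd hInada0
    (lam * (∫ ω in {ω | X ω ≤ 0}, ρ ω ∂P) / P.real {ω | X ω ≤ 0})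
  have hgain : lam * ((∫ ω in {ω | X ω ≤ 0}, ρ ω ∂P) * ε) <
      P.real {ω | X ω ≤ 0} * (U ε - U 0) := by
    rwa [sub_zero, div_mul_eq_mul_div, div_lt_iff₀' hA_pos, mul_assoc] at hslope
  exact (hXmax _ (hX.raiseZeros hε.le)).not_gt <|
    fullObj_lt_fullObj_raiseZeros ha₀ hμ hX hρ0 hρint.integrableOn hUX hρX hε.le hgain

/-- a maximizer of `E[U(X)] - μ h(X) - λ E[ρX]` over `L⁰₊` (with finite
supremum) is a.s. strictly positive. -/
theorem eu_lagrangian_maximizer_pos (P : Measure Ω) [IsProbabilityMeasure P]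
    (a₀ a₁ : ℝ) (ha₀ : 0 < a₀) (ha₀₁ : a₀ < a₁)
    (m : Measure ℝ) [IsProbabilityMeasure m] (hm : m (Set.Icc a₀ a₁) = 1)
    (ρ : Ω → ℝ) (hmρ : Measurable ρ) (hρ0 : ∀ᵐ ω ∂P, 0 < ρ ω) (hρint : Integrable ρ P)
    (U U' : ℝ → ℝ)
    (hUc : ContinuousOn U (Set.Ici 0))
    (hUd : ∀ y : ℝ, 0 < y → HasDerivAt U (U' y) y)
    (hU'c : ContinuousOn U' (Set.Ioi 0))
    (hUmono : StrictMonoOn U (Set.Ioi 0))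
    (hUconc : StrictConcaveOn ℝ (Set.Ioi 0) U)
    (hInada0 : Tendsto U' (nhdsWithin 0 (Set.Ioi 0)) atTop)
    (hInadaInf : Tendsto U' atTop (nhds 0))
    (μ lam : ℝ) (hμ : 0 < μ) (hlam : 0 < lam)
    (hfin : ∃ r : ℝ, sSup (fullObj P m a₀ a₁ ρ U μ lam '' {X | Lpos P X}) = (r : EReal))
    (X : Ω → ℝ) (hX : Lpos P X)
    (hXmax : ∀ Y, Lpos P Y →
      fullObj P m a₀ a₁ ρ U μ lam Y ≤ fullObj P m a₀ a₁ ρ U μ lam X) :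
    ∀ᵐ ω ∂P, 0 < X ω := by
  obtain ⟨r, hr⟩ := hfin
  have hle : fullObj P m a₀ a₁ ρ U μ lam X ≤ r := hr ▸ le_sSup ⟨X, hX, rfl⟩
  exact eu_lagrangian_maximizer_pos_general ha₀ (hρ0.mono fun _ => le_of_lt) hρint hUc hUd hInada0
    hμ.le hlam hX (hle.trans_lt (EReal.coe_lt_top r)).ne hXmax
end
end
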